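/- The new 6-point kernel vanishes to third order at the endpoint of its support: p₋₃(0) = 0, and the first, second, and third derivatives of p₋₃ (taken within the interval [0,1]) at r = 0 are all equal to 0. Consequently φ(x) together with its first three one-sided derivatives tend to 0 as x decreases to −3, matching the identically-zero values of φ on (−∞, −3). -/

import Mathlib

noncomputable section

namespace IB6

/-- The special second-moment constant `K = 59/60 − √29/20`. -/
def K : ℝ := 59 / 60 - Real.sqrt 29 / 20

/-- `α = 28`. -/
def a : ℝ := 28

/-- `β(r)`. -/
def b (r : ℝ) : ℝ :=
  9 / 4 - (3 / 2) * (K + r ^ 2) * r + (22 / 3 - 7 * K) * r - (7 / 3) * r ^ 3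

/-- `γ(r)`. -/
def c (r : ℝ) : ℝ :=
  -(11 / 32) * r ^ 2 + (3 / 32) * (2 * K + r ^ 2) * r ^ 2
    + (1 / 72) * ((3 * K - 1) * r + r ^ 3) ^ 2
    + (1 / 18) * ((4 - 3 * K) * r - r ^ 3) ^ 2

/-- `p₋₃(r) = (−β(r) + √(β(r)² − 4αγ(r)))/(2α)`. -/
def pm3 (r : ℝ) : ℝ := (-b r + Real.sqrt (b r ^ 2 - 4 * a * c r)) / (2 * a)

/-- `p₋₂(r)`. -/
def pm2 (r : ℝ) : ℝ :=
  -3 * pm3 r - 1 / 16 + (K + r ^ 2) / 8 + (3 * K - 1) * r / 12 + r ^ 3 / 12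

/-- `p₋₁(r)`. -/
def pm1 (r : ℝ) : ℝ := 2 * pm3 r + 1 / 4 + (4 - 3 * K) * r / 6 - r ^ 3 / 6

/-- `p₀(r)`. -/
def p0 (r : ℝ) : ℝ := 2 * pm3 r + 5 / 8 - (K + r ^ 2) / 4

/-- `p₁(r)`. -/
def p1 (r : ℝ) : ℝ := -3 * pm3 r + 1 / 4 - (4 - 3 * K) * r / 6 + r ^ 3 / 6

/-- `p₂(r)`. -/
def p2 (r : ℝ) : ℝ :=
  pm3 r - 1 / 16 + (K + r ^ 2) / 8 - (3 * K - 1) * r / 12 - r ^ 3 / 12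

/-- The new 6-point immersed-boundary kernel `φ`. -/
def phi (x : ℝ) : ℝ :=
  if -3 ≤ x ∧ x < -2 then pm3 (x - (-3))
  else if -2 ≤ x ∧ x < -1 then pm2 (x - (-2))
  else if -1 ≤ x ∧ x < 0 then pm1 (x - (-1))
  else if 0 ≤ x ∧ x < 1 then p0 (x - 0)
  else if 1 ≤ x ∧ x < 2 then p1 (x - 1)
  else if 2 ≤ x ∧ x < 3 then p2 (x - 2)
  else 0

def gq (r : ℝ) : ℝ :=
  -2 * (3 / 32 + (3 * K - 1) / 36 - (4 - 3 * K) / 9 + 5 / 72 * r ^ 2) /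
    (b r + Real.sqrt (b r ^ 2 - 4 * a * c r))

lemma K_root : 180 * K ^ 2 - 354 * K + 161 = 0 := by
  have h : Real.sqrt 29 ^ 2 = 29 := Real.sq_sqrt (by norm_num)
  unfold K
  linear_combination (9 / 20) * h

lemma c_eq (r : ℝ) :
    c r = r ^ 4 * (3 / 32 + (3 * K - 1) / 36 - (4 - 3 * K) / 9 + 5 / 72 * r ^ 2) := by
  unfold c
  linear_combination (r ^ 2 / 288) * K_root

lemma b_smooth : ContDiff ℝ 4 b := by
  unfold b
  fun_prop

lemma c_smooth : ContDiff ℝ 4 c := by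
  unfold c
  fun_prop

lemma b_zero : b 0 = 9 / 4 := by simp [b]

lemma c_zero : c 0 = 0 := by simp [c]

lemma d_smooth : ContDiff ℝ 4 (fun r => b r ^ 2 - 4 * a * c r) := by
  have := b_smooth
  have := c_smooth
  fun_prop

lemma s_smooth : ContDiffAt ℝ 4 (fun r => Real.sqrt (b r ^ 2 - 4 * a * c r)) 0 := by
  apply ContDiffAt.sqrt d_smooth.contDiffAt
  rw [b_zero, c_zero]
  norm_num

lemma gq_smooth : ContDiffAt ℝ 4 gq 0 := by
  unfold gq
  apply ContDiffAt.div
  · fun_prop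
  · exact b_smooth.contDiffAt.add s_smooth
  · have := Real.sqrt_nonneg (b 0 ^ 2 - 4 * a * c 0)
    rw [b_zero] at *
    positivity

lemma pm3_eq : pm3 =ᶠ[nhds 0] fun r => r ^ 4 * gq r := by
  have hb : ∀ᶠ r in nhds (0 : ℝ), 0 < b r :=
    b_smooth.continuous.continuousAt.eventually (lt_mem_nhds (by rw [b_zero]; norm_num))
  have hd : ∀ᶠ r in nhds (0 : ℝ), 0 < b r ^ 2 - 4 * a * c r :=
    d_smooth.continuous.continuousAt.eventually
      (lt_mem_nhds (by beta_reduce; rw [b_zero, c_zero]; norm_num))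
  filter_upwards [hb, hd] with r h1 h2
  have hs := Real.sqrt_nonneg (b r ^ 2 - 4 * a * c r)
  have hq := Real.sq_sqrt h2.le
  have hc := c_eq r
  unfold pm3 gq
  set s := Real.sqrt (b r ^ 2 - 4 * a * c r)
  have hne : b r + s ≠ 0 := by positivity
  unfold a at hq ⊢
  rw [← mul_div_assoc, div_eq_div_iff (by norm_num) hne]
  linear_combination hq - 112 * hc

lemma pm3_smooth : ContDiffAt ℝ 4 pm3 0 := by
  refine ContDiffAt.congr_of_eventuallyEq ?_ pm3_eq
  have := gq_smooth
  fun_prop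

lemma iter_zero (n : ℕ) (hn : n < 4) : iteratedDerivWithin n pm3 (Set.Icc 0 1) 0 = 0 := by
  have hn' : (n : WithTop ℕ∞) ≤ 4 := by exact_mod_cast hn.le
  rw [iteratedDerivWithin_eq_iteratedDeriv (uniqueDiffOn_Icc (by norm_num))
    (pm3_smooth.of_le hn') (by simp), pm3_eq.iteratedDeriv_eq,
    iteratedDeriv_fun_mul (by fun_prop) (gq_smooth.of_le hn')]
  apply Finset.sum_eq_zero
  intro i hi
  have hi' : 4 - i ≠ 0 := by
    have := Finset.mem_range.mp hi
    omega
  simp [iteratedDeriv_eq_iterate, hi']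

lemma pm3_zero : pm3 0 = 0 := by
  simpa using pm3_eq.eq_of_nhds

/-- The kernel vanishes to third order at the endpoint of its support: `p₋₃(0) = 0` and
the first three derivatives of `p₋₃` within `[0,1]` vanish at `r = 0`; consequently
`φ(x) → 0` as `x` decreases to `−3`, matching the zero values of `φ` on `(−∞, −3)`. -/
theorem new6pt_vanishes_third_order :
    pm3 0 = 0 ∧
    iteratedDerivWithin 1 pm3 (Set.Icc 0 1) 0 = 0 ∧
    iteratedDerivWithin 2 pm3 (Set.Icc 0 1) 0 = 0 ∧
    iteratedDerivWithin 3 pm3 (Set.Icc 0 1) 0 = 0 ∧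
    Filter.Tendsto phi (nhdsWithin (-3) (Set.Ioi (-3))) (nhds 0) ∧
    (∀ x : ℝ, x < -3 → phi x = 0) := by
  refine ⟨pm3_zero, iter_zero 1 (by norm_num), iter_zero 2 (by norm_num),
    iter_zero 3 (by norm_num), ?_, ?_⟩
  · have h : Filter.Tendsto (fun x : ℝ => pm3 (x - (-3))) (nhds (-3)) (nhds 0) := by
      have h1 : Filter.Tendsto (fun x : ℝ => x - (-3)) (nhds (-3)) (nhds 0) := by
        have : Continuous (fun x : ℝ => x - (-3)) := by fun_prop
        simpa using this.tendsto (-3)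
      have h2 := pm3_smooth.continuousAt.tendsto
      rw [pm3_zero] at h2
      exact h2.comp h1
    refine (h.mono_left nhdsWithin_le_nhds).congr' ?_
    filter_upwards [Ioo_mem_nhdsGT (show (-3 : ℝ) < -2 by norm_num)] with x hx
    unfold phi
    rw [if_pos ⟨hx.1.le, hx.2⟩]
  · intro x hx
    unfold phi
    repeat rw [if_neg (by rintro ⟨h, -⟩; linarith)]

end IB6
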